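/- arXiv:1403.2471 — 2 statements merged into one kernel-verified Lean document; each statement's English description precedes it below -/
import Mathlib

section
/- Let m ≥ 1, n ≥ 1, k ≥ 1, and for each t ∈ {1,…,k} let X_t,1,…,X_t,m be n × n real matrices. Let M_t = ∑_{i=1}^m X_{t,i}, and let N_t be the mn × mn block matrix with N_t,(i,p),(j,q) = (X_{t,i})_{p,q} (every block in the i-th block row equals X_{t,i}). Then the characteristic polynomial of the ordered product N₁ N₂ ⋯ N_k equals t^{(m−1)n} times the characteristic polynomial of the ordered product M₁ M₂ ⋯ M_k. In particular, the nonzero eigenvalues (with multiplicity) of ∏_{t=1}^k N_t coincide with those of ∏_{t=1}^k M_t. -/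
open Matrix Polynomial

/-- **Lemma 3(c): eigenvalues of ordered products of block matrices with constant block rows.**
If each `N_t` is the `mn × mn` block matrix whose every block in the `i`-th block row equals
`X_{t,i}`, and `M_t = ∑_i X_{t,i}`, then
`charpoly(N₁ N₂ ⋯ N_k) = t^{(m−1)n} · charpoly(M₁ M₂ ⋯ M_k)`: the nonzero eigenvalues (with
multiplicity) of the ordered product of the `N_t` coincide with those of the ordered product
of the `M_t`. -/
theorem blockRowConstant_prod_charpoly (m n k : ℕ) (hm : 1 ≤ m) (hn : 1 ≤ n) (hk : 1 ≤ k)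
    (X : Fin k → Fin m → Matrix (Fin n) (Fin n) ℝ)
    (N : Fin k → Matrix (Fin m × Fin n) (Fin m × Fin n) ℝ)
    (hN : ∀ t i p j q, N t (i, p) (j, q) = X t i p q) :
    (List.ofFn N).prod.charpoly
      = Polynomial.X ^ ((m - 1) * n) * (List.ofFn fun t => ∑ i, X t i).prod.charpoly := by
  obtain ⟨k, rfl⟩ : ∃ l, k = l + 1 := ⟨k - 1, by omega⟩
  let R : Matrix (Fin n) (Fin m × Fin n) ℝ := fun p jq => (1 : Matrix (Fin n) (Fin n) ℝ) p jq.2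
  let A : Fin (k + 1) → Matrix (Fin m × Fin n) (Fin n) ℝ := fun t ip q => X t ip.1 ip.2 q
  have hA : ∀ t, N t = A t * R := by
    intro t
    ext ⟨i, p⟩ ⟨j, q⟩
    rw [Matrix.mul_apply]
    simp [A, R, hN, Matrix.one_apply]
  have hR : ∀ t, R * A t = ∑ i, X t i := by
    intro t
    ext p q
    rw [Matrix.mul_apply]
    simp [A, R, Matrix.one_apply, Fintype.sum_prod_type, Matrix.sum_apply]
  have key : ∀ l : List (Fin (k + 1)),
      R * (l.map N).prod = (l.map fun t => ∑ i, X t i).prod * R := by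
    intro l
    induction l with
    | nil => simp
    | cons t l ih =>
      rw [List.map_cons, List.map_cons, List.prod_cons, List.prod_cons, hA t, ← Matrix.mul_assoc,
        ← Matrix.mul_assoc, hR, Matrix.mul_assoc, ih, Matrix.mul_assoc]
  have h2 := key (List.ofFn Fin.succ)
  simp only [List.map_ofFn, Function.comp_def] at h2
  rw [List.ofFn_succ, List.ofFn_succ, List.prod_cons, List.prod_cons, hA 0, Matrix.mul_assoc, h2,
    ← Matrix.mul_assoc, Matrix.charpoly_mul_comm_of_le, ← Matrix.mul_assoc, hR]
  · simp [Nat.sub_mul]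
  · simpa using Nat.le_mul_of_pos_left n hm
end

section
/- Let A₁,…,A_m be n × n real matrices and for each k ≥ 1 let π(k) = (π₁(k),…,π_m(k)) be an arbitrary probability vector. Define Γ(0) = I on ℝ^{n²} and Γ(k) = (∑_{j=1}^m π_j(k) (A_j ⊗ A_j)) Γ(k−1), and, for a given n × n matrix Φ(0), define Φ(k) = ∑_{j=1}^m π_j(k) A_j Φ(k−1) A_jᵀ. Then the following are equivalent: (i) for every symmetric positive semidefinite initial matrix Φ(0), tr(Φ(k)) → 0 as k → ∞; (ii) Γ(k) → 0 as k → ∞. Consequently, the stochastic jump linear system x(k+1) = A_{σ_k} x(k) with arbitrary switching probability π(k) is mean square stable if and only if Γ(k) converges to the zero matrix. -/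
open Matrix Filter
open scoped Kronecker

/-- **Mean square stability for general stochastic jump linear systems (Theorem 4).**
With `Γ(k) = (∑_j π_j(k) (A_j ⊗ A_j)) Γ(k−1)`, `Γ(0) = I`, and the second-moment recursion
`Φ(k) = ∑_j π_j(k) A_j Φ(k−1) A_jᵀ` started from an arbitrary symmetric positive semidefinite
`Φ(0)`, the system is mean square stable — i.e. `tr(Φ(k)) → 0` for every such `Φ(0)` — if and
only if `Γ(k) → 0`. -/
theorem general_jump_mean_square_stability (n m : ℕ) (hm : 1 ≤ m)
    (A : Fin m → Matrix (Fin n) (Fin n) ℝ)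
    (π : ℕ → Fin m → ℝ) (hπnn : ∀ k j, 1 ≤ k → 0 ≤ π k j)
    (hπsum : ∀ k, 1 ≤ k → ∑ j, π k j = 1)
    (Γ : ℕ → Matrix (Fin n × Fin n) (Fin n × Fin n) ℝ)
    (hΓ0 : Γ 0 = 1)
    (hΓ : ∀ k, Γ (k + 1) = (∑ j, π (k + 1) j • (A j ⊗ₖ A j)) * Γ k)
    (Φ : Matrix (Fin n) (Fin n) ℝ → ℕ → Matrix (Fin n) (Fin n) ℝ)
    (hΦ0 : ∀ Φ0, Φ Φ0 0 = Φ0)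
    (hΦ : ∀ Φ0 k, Φ Φ0 (k + 1) = ∑ j, π (k + 1) j • (A j * Φ Φ0 k * (A j)ᵀ)) :
    (∀ Φ0 : Matrix (Fin n) (Fin n) ℝ, Φ0.PosSemidef →
        Tendsto (fun k => (Φ Φ0 k).trace) atTop (nhds 0))
      ↔ Tendsto Γ atTop (nhds 0) := by
  have key : ∀ Φ0 k i j, Φ Φ0 k i j = ∑ p, ∑ q, Γ k (i, j) (p, q) * Φ0 p q := by
    intro Φ0 k
    induction k with
    | zero =>
      intro i j
      rw [hΦ0, hΓ0]
      simp [Matrix.one_apply, Prod.ext_iff, ite_and]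
    | succ k ih =>
      intro i j
      rw [hΦ, hΓ]
      have h1 : ∀ a, ((A a * Φ Φ0 k * (A a)ᵀ) i j)
          = ∑ c : Fin n × Fin n, (A a i c.1 * A a j c.2) *
              ∑ d : Fin n × Fin n, Γ k c d * Φ0 d.1 d.2 := by
        intro a
        simp only [Matrix.mul_apply, Matrix.transpose_apply, Finset.sum_mul]
        rw [Finset.sum_comm, ← Fintype.sum_prod_type']
        refine Finset.sum_congr rfl fun c _ => ?_
        rw [ih, Fintype.sum_prod_type]
        ring
      simp only [Matrix.sum_apply, Matrix.smul_apply, smul_eq_mul, h1]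
      rw [← Fintype.sum_prod_type' (f := fun p q => ((∑ a, π (k + 1) a • (A a ⊗ₖ A a)) * Γ k) (i, j) (p, q) * Φ0 p q)]
      simp only [Matrix.mul_apply, Matrix.sum_apply, Matrix.smul_apply, smul_eq_mul,
        Matrix.kroneckerMap_apply, Finset.mul_sum, Finset.sum_mul]
      rw [Finset.sum_comm_cycle]
      refine Finset.sum_congr rfl fun d _ => ?_
      rw [Finset.sum_comm]
      refine Finset.sum_congr rfl fun c _ => Finset.sum_congr rfl fun a _ => ?_
      ring
  constructor
  · intro h
    have inv : ∀ (x y : Fin n → ℝ) k (u v : Fin n → ℝ),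
        0 ≤ u ⬝ᵥ (Φ (vecMulVec x x) k *ᵥ u) + 2 * (u ⬝ᵥ (Φ (vecMulVec x y) k *ᵥ v))
          + v ⬝ᵥ (Φ (vecMulVec y y) k *ᵥ v) := by
      intro x y k
      induction k with
      | zero =>
        intro u v
        simp only [hΦ0, Matrix.vecMulVec_mulVec, dotProduct_smul]
        simp only [MulOpposite.smul_eq_mul_unop, MulOpposite.unop_op]
        rw [dotProduct_comm u x, dotProduct_comm v y]
        nlinarith [sq_nonneg (x ⬝ᵥ u + y ⬝ᵥ v)]
      | succ k ih =>
        intro u v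
        have e : ∀ Φ0 (u v : Fin n → ℝ), u ⬝ᵥ (Φ Φ0 (k+1) *ᵥ v)
            = ∑ a, π (k+1) a * (((A a)ᵀ *ᵥ u) ⬝ᵥ (Φ Φ0 k *ᵥ ((A a)ᵀ *ᵥ v))) := by
          intro Φ0 u v
          rw [hΦ, Matrix.sum_mulVec, dotProduct_sum]
          refine Finset.sum_congr rfl fun a _ => ?_
          rw [Matrix.smul_mulVec, dotProduct_smul, smul_eq_mul, ← Matrix.mulVec_mulVec,
            ← Matrix.mulVec_mulVec, Matrix.dotProduct_mulVec, ← Matrix.mulVec_transpose]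
        rw [e, e, e, Finset.mul_sum, ← Finset.sum_add_distrib, ← Finset.sum_add_distrib]
        refine Finset.sum_nonneg fun a _ => ?_
        have := mul_nonneg (hπnn (k+1) a (by omega)) (ih ((A a)ᵀ *ᵥ u) ((A a)ᵀ *ᵥ v))
        linarith
    have ent : ∀ (M : Matrix (Fin n) (Fin n) ℝ) i j,
        (Pi.single i 1 : Fin n → ℝ) ⬝ᵥ (M *ᵥ Pi.single j 1) = M i j := by
      intro M i j
      simp
    have dnn : ∀ (x : Fin n → ℝ) k i, 0 ≤ Φ (vecMulVec x x) k i i := by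
      intro x k i
      have := inv x x k (Pi.single i 1) 0
      rw [ent] at this
      simpa using this
    have dtr : ∀ (x : Fin n → ℝ) k i,
        Φ (vecMulVec x x) k i i ≤ (Φ (vecMulVec x x) k).trace := by
      intro x k i
      exact Finset.single_le_sum (f := fun i => Φ (vecMulVec x x) k i i)
        (fun i _ => dnn x k i) (Finset.mem_univ i)
    have bnd : ∀ (x y : Fin n → ℝ) k i j, |Φ (vecMulVec x y) k i j| ≤
        (Φ (vecMulVec x x) k).trace + (Φ (vecMulVec y y) k).trace := by
      intro x y k i j
      have h1 := inv x y k (Pi.single i 1) (Pi.single j 1)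
      have h2 := inv x y k (Pi.single i 1) (-Pi.single j 1)
      simp only [Matrix.mulVec_neg, dotProduct_neg, neg_dotProduct, ent] at h1 h2
      have h3 := dtr x k i
      have h4 := dtr y k j
      have h5 := dnn x k i
      have h6 := dnn y k j
      rw [abs_le]
      constructor <;> linarith
    have psd : ∀ x : Fin n → ℝ, (vecMulVec x x).PosSemidef := by
      intro x
      simpa using Matrix.posSemidef_vecMulVec_self_star x
    refine tendsto_pi_nhds.2 ?_
    rintro ⟨i, j⟩
    refine tendsto_pi_nhds.2 ?_
    rintro ⟨p, q⟩
    have hg : ∀ k, Γ k (i, j) (p, q)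
        = Φ (vecMulVec (Pi.single p 1) (Pi.single q 1)) k i j := by
      intro k
      rw [key]
      simp [vecMulVec_apply, Pi.single_apply]
    have ht := (h _ (psd (Pi.single p 1))).add (h _ (psd (Pi.single q 1)))
    rw [add_zero] at ht
    refine squeeze_zero_norm (fun k => ?_) ht
    rw [hg, Real.norm_eq_abs]
    exact bnd _ _ k i j
  · intro h Φ0 _
    simp only [Matrix.trace, Matrix.diag_apply, key]
    have hz : (0 : ℝ) = ∑ i : Fin n, ∑ p : Fin n, ∑ q : Fin n, 0 * Φ0 p q := by simp
    rw [hz]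
    refine tendsto_finsetSum _ fun i _ => tendsto_finsetSum _ fun p _ =>
      tendsto_finsetSum _ fun q _ => Tendsto.mul_const _ ?_
    exact tendsto_pi_nhds.1 (tendsto_pi_nhds.1 h (i, i)) (p, q)
end
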